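/- Let k > 2 be a fixed integer and let α ∈ (0,1) be the quadratic irrational whose partial quotients satisfy a_{2i−1} = 2 and a_{2i} = 2k for all i ≥ 1. Then limsup_{n→∞} n·D_n*(α)/log n > limsup_{n→∞} |d_n(α, 1/2)|/log n. -/

import Mathlib

open Filter Finset

noncomputable section

/-- The Gauss map `G(x) = {1/x}` (with `G(0) = 0`, since `0⁻¹ = 0` in Lean). -/
def gaussMap (x : ℝ) : ℝ := Int.fract x⁻¹

/-- `α_m = G^m(α)`. -/
def gaussIter (α : ℝ) (m : ℕ) : ℝ := gaussMap^[m] α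

/-- The `h`-th partial quotient `a_h` of `α` (meaningful for `h ≥ 1`):
`a_h = ⌊(G^{h-1} α)⁻¹⌋`. -/
def pq (α : ℝ) (h : ℕ) : ℕ := ⌊(gaussIter α (h - 1))⁻¹⌋₊

/-- Denominators `q_n` of the convergents of `α`:
`q_0 = 1`, `q_1 = a_1`, `q_{n+2} = a_{n+2} q_{n+1} + q_n`. -/
def qden (α : ℝ) : ℕ → ℕ
  | 0 => 1
  | 1 => pq α 1
  | (n + 2) => pq α (n + 2) * qden α (n + 1) + qden α n

/-- Numerators `p_n` of the convergents of `α`: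
`p_0 = 0`, `p_1 = 1`, `p_{n+2} = a_{n+2} p_{n+1} + p_n`. -/
def pnum (α : ℝ) : ℕ → ℕ
  | 0 => 0
  | 1 => 1
  | (n + 2) => pq α (n + 2) * pnum α (n + 1) + pnum α n

/-- `f_n = (-1)^n (q_n α - p_n)`. -/
def fseq (α : ℝ) (n : ℕ) : ℝ := (-1) ^ n * ((qden α n : ℝ) * α - (pnum α n : ℝ))

/-- `r_k = min {r ≥ 0 : ⌊r α⌋ = k}`. -/
def rmin (α : ℝ) (k : ℕ) : ℕ := sInf {r : ℕ | ⌊(r : ℝ) * α⌋ = (k : ℤ)}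

/-- `t_k = #{r ≥ 0 : ⌊r α⌋ = k}`. -/
def tcount (α : ℝ) (k : ℕ) : ℕ := Set.ncard {r : ℕ | ⌊(r : ℝ) * α⌋ = (k : ℤ)}

/-- `(k_j)_{j ≥ 0}`: the increasing enumeration of `{k : t_k = a_1 + 1}`. -/
def kseq (α : ℝ) (j : ℕ) : ℕ := Nat.nth (fun k => tcount α k = pq α 1 + 1) j

/-- The gaps `g_j = r_{k_j} - r_{k_{j-1}}` (for `j ≥ 1`). -/
def gseq (γ : ℝ) (j : ℕ) : ℕ := rmin γ (kseq γ j) - rmin γ (kseq γ (j - 1))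

/-- `(j_h)_{h ≥ 0}`: the increasing enumeration of those `j ≥ 1` with
`g_j = q_2 + q_1`. -/
def jbig (γ : ℝ) (h : ℕ) : ℕ :=
  Nat.nth (fun j => 1 ≤ j ∧ gseq γ j = qden γ 2 + qden γ 1) h

/-- `ᾱ_1 = G(α)/(1 - G(α))`. -/
def abar (α : ℝ) : ℝ := gaussIter α 1 / (1 - gaussIter α 1)

/-- The Ostrowski representation `r = ∑_{h=0}^N c_h q_h` with `0 ≤ c_h ≤ a_{h+1}`,
`c_{h-1} = 0` whenever `c_h = a_{h+1}`, and `c_N > 0`; `N = ord r`. -/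
def IsOstrowski (α : ℝ) (r N : ℕ) (c : ℕ → ℕ) : Prop :=
  r = ∑ h ∈ Finset.range (N + 1), c h * qden α h ∧
  (∀ h, c h ≤ pq α (h + 1)) ∧
  (∀ h, c (h + 1) = pq α (h + 2) → c h = 0) ∧
  0 < c N ∧ ∀ h, N < h → c h = 0

/-- The order `ord r` of a positive integer `r`. -/
def ordOst (α : ℝ) (r : ℕ) : ℕ := sInf {N | ∃ c, IsOstrowski α r N c}

/-- `s(y) = 2 χ_{[0,1/2)}({y}) - 1`. -/
def sfun (y : ℝ) : ℝ := if Int.fract y < 1 / 2 then 1 else -1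

/-- `S_n(α, β) = ∑_{r=0}^n s({r α + β})`. -/
def Sgen (α β : ℝ) (n : ℕ) : ℝ := ∑ r ∈ Finset.range (n + 1), sfun ((r : ℝ) * α + β)

/-- `S_n(α) = S_n(α, 0)`. -/
def Ssum (α : ℝ) (n : ℕ) : ℝ := Sgen α 0 n

/-- `max_{0 ≤ n ≤ r} S_n(α)`. -/
def maxS (α : ℝ) (r : ℕ) : ℝ := sSup (Ssum α '' Set.Iic r)

/-- `min_{0 ≤ n ≤ r} S_n(α)`. -/
def minS (α : ℝ) (r : ℕ) : ℝ := sInf (Ssum α '' Set.Iic r)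

/-- `d_n(α, β) = ∑_{r=0}^{n-1} χ_{[0,β)}({r α}) - β n`. -/
def ddisc (α β : ℝ) (n : ℕ) : ℝ :=
  (∑ r ∈ Finset.range n, if Int.fract ((r : ℝ) * α) < β then (1 : ℝ) else 0) - β * n

/-- `j(r) = max {j + sgn R₁ - 1, 0}` from the decomposition `r = r_{k_j} + R₁ q₁ + R₀`. -/
def jfun (j R1 : ℕ) : ℕ := if R1 = 0 then j - 1 else j

/-- `i(r) = k_j - j + max {R₁ - 1, 0}` from the decomposition `r = r_{k_j} + R₁ q₁ + R₀`. -/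
def ifun (α : ℝ) (j R1 : ℕ) : ℕ := kseq α j - j + (R1 - 1)

/-- `S̃(r)` from the decomposition `r = r_{k_j} + R₁ q₁ + R₀`. -/
def Stil (α : ℝ) (r R1 R0 : ℕ) : ℝ :=
  if R0 = 0 then (if R1 = 0 then sfun ((r : ℝ) * α) else 0)
  else if R1 = 0 then ∑ i ∈ Finset.Icc (r - R0) r, sfun ((i : ℝ) * α)
  else ∑ i ∈ Finset.Icc (r - R0 + 1) r, sfun ((i : ℝ) * α)

/-- `sup_{β ∈ (0,1)} |d_n(α, β)| = n D_n^*(α)`. -/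
def nDsup (α : ℝ) (n : ℕ) : ℝ := sSup ((fun β => |ddisc α β n|) '' Set.Ioo (0 : ℝ) 1)

/-- The discrepancy `D_n^*(α) = sup_{β ∈ (0,1)} |d_n(α, β)| / n`. -/
def Dstar (α : ℝ) (n : ℕ) : ℝ :=
  sSup ((fun β => |ddisc α β n| / (n : ℝ)) '' Set.Ioo (0 : ℝ) 1)

/-! Let `γ = {1/α}`. Descending over one period, `n ↦ n' = ⌊nα⌋ ↦ m = ⌊n'γ⌋`, divides the index by
`λ = 4k + 2α + 1`, so a quantity which changes by at most `c` per descent is, up to a constant, at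
most `c log n / log λ`. Reciprocity for `∑ ⌊rα⌋` and `∑ ⌊2rα⌋` computes the changes.

For `β = 1/2`: up to a bounded correction, `2 d_n(α, 1/2)` increases by `0` or `1` from `m` to `n`,
so that `limsup |d_n(α, 1/2)| / log n ≤ 1 / (2 log λ)`.

For the supremum over `β`: the mean of `d_n(α, β)` over `β` is minus the sawtooth sum
`∑ ({rα} - 1/2)`, and each `m` arises from some `n` for which that sum is larger by at least
`51/100`. Hence `limsup n D_n^* / log n ≥ 51 / (100 log λ)`; that this limsup is finite, and so
makes sense as a real number, follows from `α` being badly approximable. -/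

section FloorSum

/-- The lattice-point count `∑_{r = 0}^n ⌊rρ⌋` for `ρ ≥ 0`, taken in `ℝ` because it only ever enters
real identities. -/
def floorSum (ρ : ℝ) (n : ℕ) : ℝ := ∑ r ∈ range (n + 1), (⌊(r : ℝ) * ρ⌋₊ : ℝ)

lemma floorSum_zero (ρ : ℝ) : floorSum ρ 0 = 0 := by simp [floorSum]

lemma floorSum_succ (ρ : ℝ) (n : ℕ) :
    floorSum ρ (n + 1) = floorSum ρ n + ⌊((n + 1 : ℕ) : ℝ) * ρ⌋₊ :=
  sum_range_succ _ _

lemma floorSum_eq_sum_Icc (ρ : ℝ) (n : ℕ) :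
    floorSum ρ n = ((∑ r ∈ Icc 1 n, ⌊(r : ℝ) * ρ⌋₊ : ℕ) : ℝ) := by
  induction n with
  | zero => simp [floorSum_zero]
  | succ n ih => rw [floorSum_succ, ih, sum_Icc_succ_top (by lia)]; push_cast; rfl

lemma card_filter_natCast_le {z : ℝ} (hz : 0 ≤ z) {M : ℕ} (hM : ⌊z⌋₊ ≤ M) :
    #{s ∈ Icc 1 M | ((s : ℕ) : ℝ) ≤ z} = ⌊z⌋₊ := by
  have : {s ∈ Icc 1 M | ((s : ℕ) : ℝ) ≤ z} = Icc 1 ⌊z⌋₊ := by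
    ext s
    simp only [mem_filter, mem_Icc, ← Nat.le_floor_iff hz]
    lia
  rw [this, Nat.card_Icc, Nat.add_sub_cancel]

/-- Both sides count the lattice points of the rectangle `[1, n] × [1, ⌊nρ⌋]`: by irrationality none
of them lies on the line of slope `ρ`. -/
lemma floorSum_add_floorSum_inv {ρ : ℝ} (hρ : 0 < ρ) (hirr : Irrational ρ) (n : ℕ) :
    floorSum ρ n + floorSum ρ⁻¹ ⌊(n : ℝ) * ρ⌋₊ = n * ⌊(n : ℝ) * ρ⌋₊ := by
  set M := ⌊(n : ℝ) * ρ⌋₊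
  have below : ∀ r ∈ Icc 1 n, ⌊(r : ℝ) * ρ⌋₊ = #{s ∈ Icc 1 M | ((s : ℕ) : ℝ) ≤ r * ρ} := by
    intro r hr
    refine (card_filter_natCast_le (by positivity) (Nat.floor_le_floor ?_)).symm
    have : (r : ℝ) ≤ n := mod_cast (mem_Icc.1 hr).2
    gcongr
  have above : ∀ s ∈ Icc 1 M,
      ⌊(s : ℝ) * ρ⁻¹⌋₊ = #{r ∈ Icc 1 n | ¬ (s : ℝ) ≤ ((r : ℕ) : ℝ) * ρ} := by
    intro s hs
    have hsM : (s : ℝ) ≤ n * ρ :=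
      (Nat.cast_le.2 (mem_Icc.1 hs).2).trans (Nat.floor_le (by positivity))
    rw [← card_filter_natCast_le (M := n) (by positivity)]
    · refine congrArg card (filter_congr fun r hr => ?_)
      have hne : (r : ℝ) * ρ ≠ s :=
        (hirr.natCast_mul (Nat.one_le_iff_ne_zero.1 (mem_Icc.1 hr).1)).ne_nat s
      rw [← div_eq_mul_inv, le_div_iff₀ hρ, not_le, hne.le_iff_lt]
    · exact Nat.floor_le_of_le (by rwa [← div_eq_mul_inv, div_le_iff₀ hρ])
  have count : ∑ r ∈ Icc 1 n, ⌊(r : ℝ) * ρ⌋₊ + ∑ s ∈ Icc 1 M, ⌊(s : ℝ) * ρ⁻¹⌋₊ = n * M := by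
    have swap := sum_card_bipartiteAbove_eq_sum_card_bipartiteBelow (s := Icc 1 n) (t := Icc 1 M)
      fun r s : ℕ => ¬ (s : ℝ) ≤ r * ρ
    simp only [bipartiteAbove, bipartiteBelow] at swap
    rw [sum_congr rfl below, sum_congr rfl above, ← swap, ← sum_add_distrib]
    simp only [card_filter_add_card_filter_not, Nat.card_Icc, Nat.add_sub_cancel, sum_const,
      smul_eq_mul]
  rw [floorSum_eq_sum_Icc, floorSum_eq_sum_Icc, ← Nat.cast_add, count, Nat.cast_mul]

lemma floorSum_natCast_add (a : ℕ) {σ : ℝ} (hσ : 0 ≤ σ) (n : ℕ) :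
    floorSum (a + σ) n = a * (n * (n + 1) / 2) + floorSum σ n := by
  induction n with
  | zero => simp [floorSum_zero]
  | succ n ih =>
    have : ((n + 1 : ℕ) : ℝ) * (a + σ) = ((n + 1 : ℕ) : ℝ) * σ + ((n + 1) * a : ℕ) := by
      push_cast; ring
    rw [floorSum_succ, floorSum_succ, ih, this, Nat.floor_add_natCast (by positivity)]
    push_cast; ring

/-- Two steps of the Euclidean algorithm on `ρ = 1/(a + 1/(b + ρ))`. -/
lemma floorSum_eq_of_inv_eq {ρ σ : ℝ} {a b : ℕ} (hσ : 0 < σ) (hirr : Irrational ρ)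
    (hρσ : ρ⁻¹ = a + σ) (hσρ : σ⁻¹ = b + ρ) {n n' m : ℕ}
    (hn' : ⌊(n : ℝ) * ρ⌋₊ = n') (hm : ⌊(n' : ℝ) * σ⌋₊ = m) :
    floorSum ρ n =
      n * n' - a * (n' * (n' + 1) / 2) - n' * m + b * (m * (m + 1) / 2) + floorSum ρ m := by
  have hρ : 0 < ρ := inv_pos.1 (by rw [hρσ]; positivity)
  have hirr' : Irrational σ := by
    rw [← irrational_natCast_add_iff (n := a), ← hρσ]
    exact irrational_inv_iff.2 hirr
  have step₁ := floorSum_add_floorSum_inv hρ hirr n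
  have step₂ := floorSum_add_floorSum_inv hσ hirr' n'
  rw [hn', hρσ, floorSum_natCast_add _ hσ.le] at step₁
  rw [hm, hσρ, floorSum_natCast_add _ hρ.le] at step₂
  linarith

end FloorSum

section SawtoothSum

/-- The sawtooth sum `∑_{r < n} ({z + rα} - 1/2)`: differences of these are the discrepancies
`d_n(α, β)`, and the one at `z = 0` is minus the mean of `d_n(α, β)` over `β`. -/
def sawtoothSum (α : ℝ) (n : ℕ) (z : ℝ) : ℝ := ∑ r ∈ range n, (Int.fract (z + r * α) - 1 / 2)

lemma sawtoothSum_add (α : ℝ) (a b : ℕ) (z : ℝ) :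
    sawtoothSum α (a + b) z = sawtoothSum α a z + sawtoothSum α b (z + a * α) := by
  simp only [sawtoothSum, sum_range_add, Nat.cast_add, add_mul, add_assoc]

lemma sum_range_natCast (n : ℕ) : ∑ r ∈ range n, (r : ℝ) = n * (n - 1) / 2 := by
  induction n with
  | zero => simp
  | succ n ih => rw [sum_range_succ, ih]; push_cast; ring

lemma fract_eq_sub_natFloor {y : ℝ} (hy : 0 ≤ y) : Int.fract y = y - ⌊y⌋₊ := by
  rw [Int.fract, natCast_floor_eq_intCast_floor hy]

lemma sawtoothSum_succ_zero {α : ℝ} (hα : 0 ≤ α) (n : ℕ) :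
    sawtoothSum α (n + 1) 0 = α * (n * (n + 1) / 2) - floorSum α n - (n + 1) / 2 := by
  have fract_eq : ∀ r ∈ range (n + 1), Int.fract (0 + (r : ℝ) * α) - 1 / 2 =
      r * α - ⌊(r : ℝ) * α⌋₊ - 1 / 2 := fun r _ => by
    rw [zero_add, fract_eq_sub_natFloor (by positivity)]
  rw [sawtoothSum, sum_congr rfl fract_eq, sum_sub_distrib, sum_sub_distrib, ← sum_mul,
    sum_range_natCast, floorSum]
  simp only [sum_const, card_range, nsmul_eq_mul]
  push_cast; ring

lemma ite_fract_lt_half_eq {y : ℝ} (hy : 0 ≤ y) :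
    (if Int.fract y < 1 / 2 then (1 : ℝ) else 0) = 1 + 2 * ⌊y⌋₊ - ⌊2 * y⌋₊ := by
  have h₀ := Nat.floor_le hy
  have h₁ := Nat.lt_floor_add_one y
  rw [fract_eq_sub_natFloor hy]
  split_ifs with h
  · have : ⌊2 * y⌋₊ = 2 * ⌊y⌋₊ := by
      rw [Nat.floor_eq_iff (by positivity)]; push_cast; constructor <;> linarith
    rw [this]; push_cast; ring
  · have : ⌊2 * y⌋₊ = 2 * ⌊y⌋₊ + 1 := by
      rw [Nat.floor_eq_iff (by positivity)]; push_cast; constructor <;> linarith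
    rw [this]; push_cast; ring

lemma two_mul_ddisc_half_succ {α : ℝ} (hα : 0 ≤ α) (n : ℕ) :
    2 * ddisc α (1 / 2) (n + 1) = (n + 1) + 4 * floorSum α n - 2 * floorSum (2 * α) n := by
  have indicator_eq : ∀ r ∈ range (n + 1),
      (if Int.fract ((r : ℝ) * α) < 1 / 2 then (1 : ℝ) else 0) =
        1 + 2 * ⌊(r : ℝ) * α⌋₊ - ⌊(r : ℝ) * (2 * α)⌋₊ := fun r _ => by
    rw [ite_fract_lt_half_eq (by positivity), mul_left_comm]
  rw [ddisc, sum_congr rfl indicator_eq, sum_sub_distrib, sum_add_distrib, ← mul_sum, floorSum,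
    floorSum]
  simp only [sum_const, card_range, nsmul_eq_mul]
  push_cast; ring

lemma fract_sub_eq_ite {y β : ℝ} (hβ : β ∈ Set.Ioo (0 : ℝ) 1) :
    Int.fract (y - β) = Int.fract y - β + if Int.fract y < β then 1 else 0 := by
  have h₀ := Int.fract_nonneg y
  have h₁ := Int.fract_lt_one y
  have hy := Int.floor_add_fract y
  obtain ⟨hβ₀, hβ₁⟩ := hβ
  rw [Int.fract_eq_iff]
  split_ifs with h
  · exact ⟨by linarith, by linarith, ⌊y⌋ - 1, by push_cast; linarith⟩
  · exact ⟨by linarith, by linarith, ⌊y⌋, by linarith⟩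

lemma ddisc_eq_sawtoothSum_sub (α : ℝ) {β : ℝ} (hβ : β ∈ Set.Ioo (0 : ℝ) 1) (n : ℕ) :
    ddisc α β n = sawtoothSum α n (-β) - sawtoothSum α n 0 := by
  simp only [ddisc, sawtoothSum, zero_add, neg_add_eq_sub, fract_sub_eq_ite hβ, sum_sub_distrib,
    sum_add_distrib, sum_const, card_range, nsmul_eq_mul]
  ring

lemma abs_ddisc_le (α : ℝ) {β : ℝ} (hβ : β ∈ Set.Ioo (0 : ℝ) 1) (n : ℕ) : |ddisc α β n| ≤ n := by
  obtain ⟨hβ₀, hβ₁⟩ := hβ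
  have count_le : (#{r ∈ range n | Int.fract (((r : ℕ) : ℝ) * α) < β} : ℝ) ≤ n := by
    simpa using Nat.cast_le (α := ℝ).2 (card_filter_le (range n) _)
  have mul_le : β * n ≤ n := mul_le_of_le_one_left n.cast_nonneg hβ₁.le
  rw [ddisc, sum_boole]
  exact abs_sub_le_of_nonneg_of_le (by positivity) count_le (by positivity) mul_le

lemma abs_ddisc_le_nDsup (α : ℝ) {β : ℝ} (hβ : β ∈ Set.Ioo (0 : ℝ) 1) (n : ℕ) :
    |ddisc α β n| ≤ nDsup α n :=
  le_csSup ⟨n, Set.forall_mem_image.2 fun _ hβ' => abs_ddisc_le α hβ' n⟩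
    (Set.mem_image_of_mem _ hβ)

lemma nDsup_le {α B : ℝ} {n : ℕ} (h : ∀ β ∈ Set.Ioo (0 : ℝ) 1, |ddisc α β n| ≤ B) :
    nDsup α n ≤ B :=
  csSup_le ((Set.nonempty_Ioo.2 one_pos).image _) (Set.forall_mem_image.2 h)

lemma intervalIntegrable_ite_lt (f a b : ℝ) :
    IntervalIntegrable (fun β : ℝ => if f < β then (1 : ℝ) else 0) MeasureTheory.volume a b := by
  refine Monotone.intervalIntegrable fun a b hab => ?_
  split_ifs <;> linarith

lemma integral_ite_lt {f : ℝ} (hf : f ∈ Set.Icc (0 : ℝ) 1) :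
    ∫ β in (0 : ℝ)..1, (if f < β then (1 : ℝ) else 0) = 1 - f := by
  have eq_indicator : (fun β : ℝ => if f < β then (1 : ℝ) else 0) =
      (Set.Ioi f).indicator fun _ => 1 := by
    funext β
    simp [Set.indicator_apply]
  rw [eq_indicator, intervalIntegral.integral_of_le zero_le_one,
    MeasureTheory.setIntegral_indicator measurableSet_Ioi, Set.Ioc_inter_Ioi, sup_eq_right.2 hf.1]
  simp [hf.2]

lemma intervalIntegrable_sum_ite_lt (α : ℝ) (n : ℕ) (a b : ℝ) :
    IntervalIntegrable
      (fun β => ∑ r ∈ range n, if Int.fract ((r : ℝ) * α) < β then (1 : ℝ) else 0)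
      MeasureTheory.volume a b := by
  simpa only [Finset.sum_fn] using IntervalIntegrable.sum (range n) fun r _ =>
    intervalIntegrable_ite_lt (Int.fract ((r : ℝ) * α)) a b

lemma intervalIntegrable_ddisc (α : ℝ) (n : ℕ) (a b : ℝ) :
    IntervalIntegrable (fun β => ddisc α β n) MeasureTheory.volume a b :=
  (intervalIntegrable_sum_ite_lt α n a b).sub (Continuous.intervalIntegrable (by fun_prop) _ _)

lemma integral_ddisc (α : ℝ) (n : ℕ) :
    ∫ β in (0 : ℝ)..1, ddisc α β n = -sawtoothSum α n 0 := by
  have integral_eq : ∀ r ∈ range n,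
      ∫ β in (0 : ℝ)..1, (if Int.fract ((r : ℝ) * α) < β then (1 : ℝ) else 0) =
        1 - Int.fract ((r : ℝ) * α) :=
    fun r _ => integral_ite_lt ⟨Int.fract_nonneg _, (Int.fract_lt_one _).le⟩
  simp only [ddisc]
  rw [intervalIntegral.integral_sub (intervalIntegrable_sum_ite_lt α n 0 1)
      (Continuous.intervalIntegrable (by fun_prop) _ _),
    intervalIntegral.integral_finsetSum fun r _ => intervalIntegrable_ite_lt _ _ _,
    sum_congr rfl integral_eq]
  simp only [sawtoothSum, zero_add, sum_sub_distrib, sum_const, card_range, nsmul_eq_mul,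
    intervalIntegral.integral_mul_const, integral_id]
  ring

lemma sawtoothSum_zero_le_nDsup (α : ℝ) (n : ℕ) : sawtoothSum α n 0 ≤ nDsup α n := by
  have : ∫ _ in (0 : ℝ)..1, -nDsup α n ≤ ∫ β in (0 : ℝ)..1, ddisc α β n :=
    intervalIntegral.integral_mono_on_of_le_Ioo zero_le_one (by simp)
      (intervalIntegrable_ddisc α n 0 1) fun β hβ => neg_le_of_abs_le (abs_ddisc_le_nDsup α hβ n)
  rw [integral_ddisc, intervalIntegral.integral_const, sub_zero, one_smul] at this
  exact neg_le_neg_iff.1 this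

end SawtoothSum

section BadlyApproximable

lemma sum_range_toNat_emod {p : ℤ} {q : ℕ} (hpq : IsCoprime p q) (m : ℤ) (G : ℕ → ℝ) :
    ∑ r ∈ range q, G ((m + r * p) % q).toNat = ∑ b ∈ range q, G b := by
  have residue (r : ℕ) (hr : r < q) : (((m + r * p) % q).toNat : ℤ) = (m + r * p) % q :=
    Int.toNat_of_nonneg (Int.emod_nonneg _ (by lia))
  have maps : Set.MapsTo (fun r : ℕ => ((m + r * p) % q).toNat) (range q) (range q) := by
    intro r hr
    have hr : r < q := by simpa using hr
    have := Int.emod_lt_of_pos (m + r * p) (show (0 : ℤ) < q by lia)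
    simp only [coe_range, Set.mem_Iio]
    lia
  have inj : Set.InjOn (fun r : ℕ => ((m + r * p) % q).toNat) (range q) := by
    intro r hr r' hr' h
    simp only [coe_range, Set.mem_Iio] at hr hr' h
    have hmod : (m + r * p) % q = (m + r' * p) % q := by
      rw [← residue r hr, ← residue r' hr', h]
    have hdvd : (q : ℤ) ∣ (r - r') * p := by
      convert Int.dvd_of_emod_eq_zero (Int.emod_eq_emod_iff_emod_sub_eq_zero.1 hmod) using 1
      ring
    have := Int.eq_zero_of_abs_lt_dvd (hpq.symm.dvd_of_dvd_mul_right hdvd) (by rw [abs_lt]; lia)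
    lia
  exact sum_nbij _ maps inj (surjOn_of_injOn_of_card_le _ maps inj le_rfl) fun _ _ => rfl

/-- A bound for `|{w} - b/q|` when `w` is congruent modulo `1` to a point within `2/q` of `b/q`: it
is `2/q`, except for the residues `b = 0` and `b = q - 1`, where `w` may wrap around an integer. -/
def wrapError (q b : ℕ) : ℝ := 2 / q + (if b = 0 then 1 else 0) + (if b = q - 1 then 1 else 0)

lemma sum_range_wrapError {q : ℕ} (hq : 0 < q) : ∑ b ∈ range q, wrapError q b = 4 := by
  simp only [wrapError, sum_add_distrib, sum_ite_eq', mem_range, hq, Nat.sub_one_lt hq.ne',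
    if_true, sum_const, card_range, nsmul_eq_mul]
  field_simp
  norm_num

lemma abs_fract_sub_div_le_wrapError {q b : ℕ} (hb : b < q) {η w : ℝ} (hη₀ : -1 < η) (hη₁ : η < 2)
    {t : ℤ} (hw : w = t + (b + η) / q) : |Int.fract w - b / q| ≤ wrapError q b := by
  have hq : (0 : ℝ) < q := mod_cast b.zero_le.trans_lt hb
  by_cases hwrap : b = 0 ∨ b = q - 1
  · have one_le : 1 ≤ wrapError q b := by
      rcases hwrap with h | h <;>
      · simp only [wrapError, ← h, if_true]
        have : (0 : ℝ) < 2 / q := by positivity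
        split_ifs <;> linarith
    have hbq : (b : ℝ) / q < 1 := (div_lt_one hq).2 (mod_cast hb)
    exact (abs_sub_le_of_nonneg_of_le (Int.fract_nonneg w) (Int.fract_lt_one w).le (by positivity)
      hbq.le).trans one_le
  · obtain ⟨hb₀, hb₁⟩ := not_or.1 hwrap
    have h₁ : (1 : ℝ) ≤ b := mod_cast Nat.one_le_iff_ne_zero.2 hb₀
    have h₂ : (b : ℝ) + 2 ≤ q := mod_cast (show b + 2 ≤ q by lia)
    have fract_eq : Int.fract w = (b + η) / q := by
      rw [hw, Int.fract_intCast_add, Int.fract_eq_self]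
      exact ⟨div_nonneg (by linarith) hq.le, (div_lt_one hq).2 (by linarith)⟩
    rw [fract_eq, wrapError, if_neg hb₀, if_neg hb₁, add_zero, add_zero, ← sub_div,
      add_sub_cancel_left, abs_div, abs_of_pos hq]
    gcongr
    exact abs_le.2 ⟨by linarith, hη₁.le⟩

variable {α : ℝ} {a : ℚ}

lemma abs_fract_add_mul_sub_le_wrapError (ha : |α - a| ≤ 1 / a.den ^ 2) (z : ℝ) {r : ℕ}
    (hr : r < a.den) :
    |Int.fract (z + r * α) - ((⌊z * a.den⌋ + r * a.num) % a.den).toNat / a.den| ≤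
      wrapError a.den ((⌊z * a.den⌋ + r * a.num) % a.den).toNat := by
  have hq : (0 : ℝ) < a.den := mod_cast a.den_pos
  set m := ⌊z * a.den⌋
  obtain ⟨b, hb⟩ := Int.eq_ofNat_of_zero_le
    (Int.emod_nonneg (m + r * a.num) (mod_cast a.den_nz : (a.den : ℤ) ≠ 0))
  have hbq : b < a.den := by
    have := Int.emod_lt_of_pos (m + r * a.num) (mod_cast a.den_pos : (0 : ℤ) < a.den)
    lia
  have drift : |r * a.den * (α - a)| < 1 := by
    rw [abs_mul, abs_of_nonneg (by positivity)]
    calc (r : ℝ) * a.den * |α - a| ≤ r * a.den * (1 / a.den ^ 2) := by gcongr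
      _ = r / a.den := by field_simp
      _ < 1 := (div_lt_one hq).2 (mod_cast hr)
  rw [abs_lt] at drift
  have hf₀ := Int.fract_nonneg (z * a.den)
  have hf₁ := Int.fract_lt_one (z * a.den)
  rw [hb, Int.toNat_natCast]
  refine abs_fract_sub_div_le_wrapError hbq (η := Int.fract (z * a.den) + r * a.den * (α - a))
    (by linarith) (by linarith) (t := (m + r * a.num) / a.den) ?_
  have hdiv : (b : ℝ) = m + r * a.num - a.den * ((m + r * a.num) / a.den : ℤ) := by
    rw [Int.emod_def] at hb
    exact_mod_cast hb.symm
  have ha_mul : (a : ℝ) * a.den = a.num := mod_cast a.mul_den_eq_num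
  have hm : z * a.den = m + Int.fract (z * a.den) := (Int.floor_add_fract _).symm
  rw [← sub_eq_iff_eq_add', eq_div_iff hq.ne', hdiv]
  linear_combination hm + r * ha_mul

/-- Up to the wrap-around error, the `q` points of the sum are those of the grid `{0, …, q - 1}/q`,
whose sawtooth sum is `-1/2`. -/
lemma abs_sawtoothSum_den_le (ha : |α - a| ≤ 1 / a.den ^ 2) (z : ℝ) :
    |sawtoothSum α a.den z| ≤ 9 / 2 := by
  have permute := sum_range_toNat_emod (p := a.num) (q := a.den)
    (Int.isCoprime_iff_gcd_eq_one.2 (by simpa [Int.gcd] using a.reduced)) ⌊z * a.den⌋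
  set b : ℕ → ℕ := fun r => ((⌊z * a.den⌋ + r * a.num) % a.den).toNat
  have grid : ∑ b ∈ range a.den, ((b : ℝ) / a.den - 1 / 2) = -1 / 2 := by
    rw [sum_sub_distrib, ← sum_div, sum_range_natCast]
    simp only [sum_const, card_range, nsmul_eq_mul]
    field_simp
    ring
  have split : sawtoothSum α a.den z =
      ∑ r ∈ range a.den, (Int.fract (z + r * α) - b r / a.den) + -1 / 2 := by
    rw [← grid, ← permute fun b => (b : ℝ) / a.den - 1 / 2, ← sum_add_distrib]
    exact sum_congr rfl fun r _ => by ring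
  have error : |∑ r ∈ range a.den, (Int.fract (z + r * α) - b r / a.den)| ≤ 4 :=
    calc _ ≤ ∑ r ∈ range a.den, |Int.fract (z + r * α) - b r / a.den| := abs_sum_le_sum_abs _ _
      _ ≤ ∑ r ∈ range a.den, wrapError a.den (b r) := sum_le_sum fun r hr =>
        abs_fract_add_mul_sub_le_wrapError ha z (mem_range.1 hr)
      _ = 4 := (permute _).trans (sum_range_wrapError a.den_pos)
  rw [split]
  rw [abs_le] at error ⊢
  constructor <;> linarith

/-- `α` is badly approximable with constant `1/A`. -/
def IsBadlyApproximable (A α : ℝ) : Prop := ∀ a : ℚ, 1 ≤ A * (a.den ^ 2 * |α - a|)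

lemma exists_isBadlyApproximable_of_quadratic (hα : Irrational α) {a b c : ℤ} (ha : a ≠ 0)
    (h : a * α ^ 2 + b * α + c = 0) : ∃ A > 0, IsBadlyApproximable A α := by
  open Polynomial in
  obtain ⟨A, hA, hbad⟩ := Liouville.exists_pos_real_of_irrational_root hα
    (f := C a * X ^ 2 + C b * X + C c) (by
      rw [← leadingCoeff_ne_zero, leadingCoeff_quadratic ha]; exact ha) (by simpa using h)
  refine ⟨A, hA, fun r => ?_⟩
  have := hbad r.num (r.den - 1)
  rwa [Polynomial.natDegree_quadratic ha, Nat.cast_pred r.den_pos, sub_add_cancel, ← Rat.cast_def,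
    ← mul_assoc, mul_comm] at this

variable {A : ℝ}

lemma IsBadlyApproximable.natCast_lt_mul_den (hA : 0 < A) (h : IsBadlyApproximable A α) {n : ℕ}
    (ha : |α - a| ≤ 1 / ((n + 1) * a.den)) : (n : ℝ) < A * a.den := by
  have : 1 ≤ A * a.den / (n + 1) :=
    calc 1 ≤ A * (a.den ^ 2 * |α - a|) := h a
      _ ≤ A * (a.den ^ 2 * (1 / ((n + 1) * a.den))) := by gcongr
      _ = A * a.den / (n + 1) := by field_simp
  rw [one_le_div (by positivity)] at this
  linarith

/-- Split off Dirichlet's denominator `q ≤ n`: since `q` is comparable to `n`, this lowers `log n`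
by a constant. -/
lemma IsBadlyApproximable.abs_sawtoothSum_le (hA : 0 < A) (h : IsBadlyApproximable A α) {n : ℕ}
    (hn : 0 < n) (z : ℝ) : |sawtoothSum α n z| ≤ 9 / 2 * (1 + A * Real.log n) := by
  induction n using Nat.strong_induction_on generalizing z with
  | _ n ih =>
    obtain ⟨a, ha, hle⟩ := Real.exists_rat_abs_sub_le_and_den_le α hn
    have hq := a.den_pos
    have block (z : ℝ) : |sawtoothSum α a.den z| ≤ 9 / 2 := by
      refine abs_sawtoothSum_den_le (ha.trans ?_) z
      have : (a.den : ℝ) ≤ n := mod_cast hle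
      rw [sq]
      gcongr
      linarith
    obtain ⟨r, rfl⟩ := Nat.exists_eq_add_of_le hle
    rcases r.eq_zero_or_pos with rfl | hr
    · have := Real.log_natCast_nonneg (a.den + 0)
      exact (block z).trans (le_mul_of_one_le_right (by norm_num) (by nlinarith))
    · have hr' : (0 : ℝ) < r := mod_cast hr
      have hn' : (0 : ℝ) < (a.den + r : ℕ) := mod_cast hn
      have log_le := Real.log_le_sub_one_of_pos (div_pos hr' hn')
      rw [Real.log_div hr'.ne' hn'.ne'] at log_le
      have comparable : 1 ≤ A * (1 - r / (a.den + r : ℕ)) := by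
        have := h.natCast_lt_mul_den hA ha
        rw [one_sub_div hn'.ne', ← mul_div_assoc, one_le_div hn']
        push_cast at this ⊢
        linarith
      have rest := ih r (by lia) hr (z + a.den * α)
      rw [sawtoothSum_add]
      calc _ ≤ 9 / 2 + 9 / 2 * (1 + A * Real.log r) :=
            (abs_add_le _ _).trans (add_le_add (block z) rest)
        _ ≤ _ := by nlinarith

lemma IsBadlyApproximable.nDsup_le (hA : 0 < A) (h : IsBadlyApproximable A α) {n : ℕ}
    (hn : 0 < n) : nDsup α n ≤ 9 + 9 * A * Real.log n := by
  refine _root_.nDsup_le fun β hβ => ?_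
  rw [ddisc_eq_sawtoothSum_sub α hβ]
  calc _ ≤ _ := abs_sub _ _
    _ ≤ _ := add_le_add (h.abs_sawtoothSum_le hA hn _) (h.abs_sawtoothSum_le hA hn _)
    _ = _ := by ring

end BadlyApproximable

section GaussMap

variable {α β : ℝ}

lemma gaussIter_succ (α : ℝ) (m : ℕ) : gaussIter α (m + 1) = Int.fract (gaussIter α m)⁻¹ :=
  Function.iterate_succ_apply' gaussMap m α

lemma gaussIter_gaussIter (α : ℝ) (m j : ℕ) :
    gaussIter (gaussIter α j) m = gaussIter α (m + j) :=
  (Function.iterate_add_apply gaussMap m j α).symm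

lemma pq_gaussIter (α : ℝ) (m j : ℕ) : pq (gaussIter α j) (m + 1) = pq α (m + j + 1) := by
  simp only [pq, Nat.add_sub_cancel, gaussIter_gaussIter]

lemma gaussIter_mem_Ico (hα : α ∈ Set.Ico (0 : ℝ) 1) (m : ℕ) :
    gaussIter α m ∈ Set.Ico (0 : ℝ) 1 := by
  cases m with
  | zero => exact hα
  | succ m => rw [gaussIter_succ]; exact ⟨Int.fract_nonneg _, Int.fract_lt_one _⟩

lemma inv_gaussIter (hα : α ∈ Set.Ico (0 : ℝ) 1) (m : ℕ) :
    (gaussIter α m)⁻¹ = pq α (m + 1) + gaussIter α (m + 1) := by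
  rw [gaussIter_succ, pq, Nat.add_sub_cancel,
    natCast_floor_eq_intCast_floor (inv_nonneg.2 (gaussIter_mem_Ico hα m).1)]
  exact (Int.floor_add_fract _).symm

lemma one_le_pq (hα : α ∈ Set.Ico (0 : ℝ) 1) {m : ℕ} (h : gaussIter α m ≠ 0) :
    1 ≤ pq α (m + 1) := by
  obtain ⟨h₀, h₁⟩ := gaussIter_mem_Ico hα m
  refine Nat.le_floor ?_
  simpa using one_le_inv_iff₀.2 ⟨h₀.lt_of_ne' h, h₁.le⟩

lemma gaussIter_eq_zero_iff (hα : α ∈ Set.Ico (0 : ℝ) 1) {m : ℕ} :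
    gaussIter α m = 0 ↔ pq α (m + 1) = 0 := by
  refine ⟨fun h => by simp [pq, h], fun h => ?_⟩
  by_contra h₀
  have := one_le_pq hα h₀
  lia

lemma gaussIter_mul_gaussIter_succ_le (hα : α ∈ Set.Ico (0 : ℝ) 1) (m : ℕ) :
    gaussIter α m * gaussIter α (m + 1) ≤ 1 / 2 := by
  rcases eq_or_ne (gaussIter α m) 0 with h | h
  · rw [h, zero_mul]; norm_num
  · have hm := (gaussIter_mem_Ico hα m).1
    have hpq : (1 : ℝ) ≤ pq α (m + 1) := mod_cast one_le_pq hα h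
    have hinv := mul_inv_cancel₀ h
    rw [inv_gaussIter hα] at hinv
    nlinarith [(gaussIter_mem_Ico hα (m + 1)).2]

lemma gaussIter_sub_gaussIter (hα : α ∈ Set.Ico (0 : ℝ) 1) (hβ : β ∈ Set.Ico (0 : ℝ) 1) {m : ℕ}
    (h : pq α (m + 1) = pq β (m + 1)) :
    gaussIter α m - gaussIter β m =
      -(gaussIter α m * gaussIter β m * (gaussIter α (m + 1) - gaussIter β (m + 1))) := by
  have hzero : gaussIter α m = 0 ↔ gaussIter β m = 0 := by
    rw [gaussIter_eq_zero_iff hα, gaussIter_eq_zero_iff hβ, h]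
  by_cases h₀ : gaussIter α m = 0
  · simp [h₀, hzero.1 h₀]
  · have hinvα := mul_inv_cancel₀ h₀
    have hinvβ := mul_inv_cancel₀ (mt hzero.2 h₀)
    rw [inv_gaussIter hα, h] at hinvα
    rw [inv_gaussIter hβ] at hinvβ
    linear_combination gaussIter β m * hinvα - gaussIter α m * hinvβ

lemma abs_sub_le_of_pq_eq (hα : α ∈ Set.Ico (0 : ℝ) 1) (hβ : β ∈ Set.Ico (0 : ℝ) 1)
    (h : ∀ m, pq α (m + 1) = pq β (m + 1)) (m : ℕ) :
    |α - β| ≤ (1 / 4) ^ m * |gaussIter α (2 * m) - gaussIter β (2 * m)| := by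
  induction m with
  | zero => simp [gaussIter]
  | succ m ih =>
    have hα₀ := gaussIter_mul_gaussIter_succ_le hα (2 * m)
    have hβ₀ := gaussIter_mul_gaussIter_succ_le hβ (2 * m)
    have hα₁ : 0 ≤ gaussIter α (2 * m) * gaussIter α (2 * m + 1) :=
      mul_nonneg (gaussIter_mem_Ico hα _).1 (gaussIter_mem_Ico hα _).1
    have hβ₁ : 0 ≤ gaussIter β (2 * m) * gaussIter β (2 * m + 1) :=
      mul_nonneg (gaussIter_mem_Ico hβ _).1 (gaussIter_mem_Ico hβ _).1
    have contract : gaussIter α (2 * m) - gaussIter β (2 * m) =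
        gaussIter α (2 * m) * gaussIter α (2 * m + 1) *
          (gaussIter β (2 * m) * gaussIter β (2 * m + 1)) *
            (gaussIter α (2 * m + 2) - gaussIter β (2 * m + 2)) := by
      rw [gaussIter_sub_gaussIter hα hβ (h (2 * m)), gaussIter_sub_gaussIter hα hβ (h (2 * m + 1))]
      ring
    rw [contract, abs_mul, abs_of_nonneg (mul_nonneg hα₁ hβ₁)] at ih
    calc _ ≤ _ := ih
      _ ≤ (1 / 4) ^ m *
            (1 / 2 * (1 / 2) * |gaussIter α (2 * m + 2) - gaussIter β (2 * m + 2)|) := by gcongr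
      _ = _ := by rw [mul_add_one]; ring

theorem eq_of_pq_eq (hα : α ∈ Set.Ico (0 : ℝ) 1) (hβ : β ∈ Set.Ico (0 : ℝ) 1)
    (h : ∀ m, pq α (m + 1) = pq β (m + 1)) : α = β := by
  have bound (m : ℕ) : |α - β| ≤ (1 / 4) ^ m := by
    obtain ⟨hα₀, hα₁⟩ := gaussIter_mem_Ico hα (2 * m)
    obtain ⟨hβ₀, hβ₁⟩ := gaussIter_mem_Ico hβ (2 * m)
    exact (abs_sub_le_of_pq_eq hα hβ h m).trans <| mul_le_of_le_one_right (by positivity) <|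
      abs_sub_le_of_nonneg_of_le hα₀ hα₁.le hβ₀ hβ₁.le
  have : |α - β| ≤ 0 := ge_of_tendsto'
    (tendsto_pow_atTop_nhds_zero_of_lt_one (r := (1 / 4 : ℝ)) (by norm_num) (by norm_num)) bound
  exact sub_eq_zero.1 (abs_nonpos_iff.1 this)

end GaussMap

/-- `α = [2, 2k, 2, 2k, …]` and its shift `γ = [2k, 2, 2k, 2, …]`, encoded by the two equations
which say that the Gauss map exchanges them. -/
structure PeriodTwo (k : ℕ) (α γ : ℝ) : Prop where
  irrational : Irrational α
  pos_right : 0 < γ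
  inv_left : α⁻¹ = 2 + γ
  inv_right : γ⁻¹ = 2 * k + α

lemma periodTwo_of_pq {k : ℕ} {α : ℝ} (hirr : Irrational α) (hα : α ∈ Set.Ioo (0 : ℝ) 1)
    (ha : ∀ i : ℕ, pq α (2 * i + 1) = 2 ∧ pq α (2 * i + 2) = 2 * k) :
    PeriodTwo k α (gaussIter α 1) := by
  have hα' : α ∈ Set.Ico (0 : ℝ) 1 := Set.Ioo_subset_Ico_self hα
  have periodic : gaussIter α 2 = α := by
    refine eq_of_pq_eq (gaussIter_mem_Ico hα' 2) hα' fun m => ?_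
    rw [pq_gaussIter]
    rcases m.even_or_odd' with ⟨i, rfl | rfl⟩
    · exact (ha (i + 1)).1.trans (ha i).1.symm
    · exact (ha (i + 1)).2.trans (ha i).2.symm
  have inv_right : (gaussIter α 1)⁻¹ = 2 * k + α := by
    simpa [(ha 0).2, periodic] using inv_gaussIter hα' 1
  refine ⟨hirr, ?_, ?_, inv_right⟩
  · rw [← inv_pos, inv_right]
    have := hα.1
    positivity
  · have := inv_gaussIter hα' 0
    rw [(ha 0).1] at this
    exact_mod_cast this

/-- The factor `1/(αγ)` by which a descent over one period divides an index. -/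
def growth (k : ℕ) (α : ℝ) : ℝ := 4 * k + 2 * α + 1

lemma growth_eq (k : ℕ) (α : ℝ) : growth k α = 2 * (2 * k + α) + 1 := by
  rw [growth]; ring

namespace PeriodTwo

variable {k : ℕ} {α γ : ℝ}

lemma pos_left (p : PeriodTwo k α γ) : 0 < α := by
  have := p.pos_right
  rw [← inv_pos, p.inv_left]
  positivity

lemma mul_left (p : PeriodTwo k α γ) : α * (2 + γ) = 1 := by
  rw [← p.inv_left, mul_inv_cancel₀ p.pos_left.ne']

lemma mul_right (p : PeriodTwo k α γ) : γ * (2 * k + α) = 1 := by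
  rw [← p.inv_right, mul_inv_cancel₀ p.pos_right.ne']

lemma eq_natCast_mul (p : PeriodTwo k α γ) : α = k * γ := by
  linear_combination (p.mul_left - p.mul_right) / 2

lemma quadratic (p : PeriodTwo k α γ) : α * (2 * k + α) = k := by
  rw [p.eq_natCast_mul, mul_assoc, ← p.eq_natCast_mul, p.mul_right, mul_one]

lemma one_le (p : PeriodTwo k α γ) : (1 : ℝ) ≤ k := by
  rcases k.eq_zero_or_pos with rfl | h
  · exact absurd p.eq_natCast_mul (by simpa using p.pos_left.ne')
  · exact_mod_cast h

lemma lt_half (p : PeriodTwo k α γ) : α < 1 / 2 := by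
  linarith [p.mul_left, mul_pos p.pos_left p.pos_right]

lemma right_lt_half (p : PeriodTwo k α γ) : γ < 1 / 2 := by
  linarith [p.lt_half, p.eq_natCast_mul, le_mul_of_one_le_left p.pos_right.le p.one_le]

lemma two_fifths_lt (p : PeriodTwo k α γ) : 2 / 5 < α := by
  linarith [p.mul_left, mul_lt_mul_of_pos_left p.right_lt_half p.pos_left]

lemma irrational_right (p : PeriodTwo k α γ) : Irrational γ := by
  have := p.irrational
  rw [p.eq_natCast_mul] at this
  exact this.of_natCast_mul k

lemma mul_growth (p : PeriodTwo k α γ) : α * growth k α = 2 * k + α := by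
  rw [growth]; linear_combination 2 * p.quadratic

lemma two_add_mul (p : PeriodTwo k α γ) : (2 + γ) * (2 * k + α) = growth k α := by
  rw [growth]; linear_combination p.mul_right

lemma one_lt_growth (p : PeriodTwo k α γ) : 1 < growth k α := by
  have := p.pos_left
  rw [growth, lt_add_iff_pos_left]
  positivity

lemma exists_isBadlyApproximable (p : PeriodTwo k α γ) : ∃ A > 0, IsBadlyApproximable A α :=
  exists_isBadlyApproximable_of_quadratic p.irrational (a := 1) (b := 2 * k) (c := -k) one_ne_zero
    (by push_cast; linear_combination p.quadratic)

lemma floorSum_eq (p : PeriodTwo k α γ) {n n' m : ℕ} (hn' : ⌊(n : ℝ) * α⌋₊ = n')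
    (hm : ⌊(n' : ℝ) * γ⌋₊ = m) :
    floorSum α n = n * n' - n' * (n' + 1) - n' * m + k * (m * (m + 1)) + floorSum α m := by
  rw [floorSum_eq_of_inv_eq (a := 2) (b := 2 * k) p.pos_right p.irrational (mod_cast p.inv_left)
    (mod_cast p.inv_right) hn' hm]
  push_cast; ring

/-- `2α = [1, 4k, 1, 4k, …]`. -/
lemma floorSum_two_mul_eq (p : PeriodTwo k α γ) {n n' m : ℕ} (hn' : ⌊(n : ℝ) * (2 * α)⌋₊ = n')
    (hm : ⌊(n' : ℝ) * (γ / 2)⌋₊ = m) :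
    floorSum (2 * α) n =
      n * n' - n' * (n' + 1) / 2 - n' * m + 2 * k * (m * (m + 1)) + floorSum (2 * α) m := by
  have inv_left : (2 * α)⁻¹ = (1 : ℕ) + γ / 2 := by rw [mul_inv, p.inv_left]; push_cast; ring
  have inv_right : (γ / 2)⁻¹ = (4 * k : ℕ) + 2 * α := by
    rw [inv_div, div_eq_mul_inv, p.inv_right]; push_cast; ring
  rw [floorSum_eq_of_inv_eq (half_pos p.pos_right)
    (by simpa using p.irrational.natCast_mul (m := 2) two_ne_zero) inv_left inv_right hn' hm]
  push_cast; ring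

end PeriodTwo

section AdjacentHalfDisc

/-- `d_{n+1}(α, 1/2) + d_{n+2}(α, 1/2) - 1/2`. It differs from `2 d_{n+1}(α, 1/2)` by the indicator
of `{(n + 1)α} ≥ 1/2`, and unlike the latter it never decreases along the descent `n ↦ m` of
`Descent` read backwards. -/
def adjacentHalfDisc (α : ℝ) (n : ℕ) : ℝ :=
  ddisc α (1 / 2) (n + 1) + ddisc α (1 / 2) (n + 2) - 1 / 2

variable {α f : ℝ} {n : ℕ} {t : ℤ}

lemma adjacentHalfDisc_eq (α : ℝ) (n : ℕ) :
    adjacentHalfDisc α n = 2 * ddisc α (1 / 2) (n + 1) -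
      if Int.fract (((n + 1 : ℕ) : ℝ) * α) < 1 / 2 then 0 else 1 := by
  have : ddisc α (1 / 2) (n + 2) = ddisc α (1 / 2) (n + 1) +
      (if Int.fract (((n + 1 : ℕ) : ℝ) * α) < 1 / 2 then 1 else 0) - 1 / 2 := by
    simp only [ddisc, sum_range_succ _ (n + 1)]
    push_cast; ring
  rw [adjacentHalfDisc, this]
  split_ifs <;> ring

lemma adjacentHalfDisc_eq_of_lt_half (h : (n + 1) * α = t + f) (h₀ : 0 ≤ f) (h₁ : f < 1 / 2) :
    adjacentHalfDisc α n = 2 * ddisc α (1 / 2) (n + 1) := by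
  rw [adjacentHalfDisc_eq, Nat.cast_succ, h, Int.fract_intCast_add,
    Int.fract_eq_self.2 ⟨h₀, by linarith⟩, if_pos h₁, sub_zero]

lemma adjacentHalfDisc_eq_of_half_le (h : (n + 1) * α = t + f) (h₀ : 1 / 2 ≤ f) (h₁ : f < 1) :
    adjacentHalfDisc α n = 2 * ddisc α (1 / 2) (n + 1) - 1 := by
  rw [adjacentHalfDisc_eq, Nat.cast_succ, h, Int.fract_intCast_add,
    Int.fract_eq_self.2 ⟨by linarith, h₁⟩, if_neg h₀.not_gt]

lemma two_mul_ddisc_half_eq_or (α : ℝ) (n : ℕ) :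
    2 * ddisc α (1 / 2) (n + 1) = adjacentHalfDisc α n ∨
      2 * ddisc α (1 / 2) (n + 1) = adjacentHalfDisc α n + 1 := by
  rw [adjacentHalfDisc_eq]
  split_ifs
  · exact .inl (by ring)
  · exact .inr (by ring)

end AdjacentHalfDisc

/-- One period `n ↦ n' = ⌊nα⌋ ↦ m = ⌊n'γ⌋` of the continued fraction algorithm, with remainders `x`
and `y`; the digit `u` measures the loss in `n ≈ 2n' + m`. -/
structure Descent (k : ℕ) (α γ : ℝ) (n n' m u : ℕ) (x y : ℝ) : Prop extends
    PeriodTwo k α γ where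
  index_eq : n = 2 * n' + m + u
  natCast_mul_left : n * α = n' + x
  natCast_mul_right : n' * γ = m + y
  left_mem : x ∈ Set.Ico (0 : ℝ) 1
  right_mem : y ∈ Set.Ico (0 : ℝ) 1

lemma PeriodTwo.exists_descent {k : ℕ} {α γ : ℝ} (p : PeriodTwo k α γ) (n : ℕ) :
    ∃ n' m u x y, Descent k α γ n n' m u x y := by
  have hα := p.pos_left
  have hγ := p.pos_right
  set n' := ⌊(n : ℝ) * α⌋₊
  set m := ⌊(n' : ℝ) * γ⌋₊
  have hn'₀ : (n' : ℝ) ≤ n * α := Nat.floor_le (by positivity)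
  have hn'₁ : (n : ℝ) * α < n' + 1 := Nat.lt_floor_add_one _
  have hm₀ : (m : ℝ) ≤ n' * γ := Nat.floor_le (by positivity)
  have hm₁ : (n' : ℝ) * γ < m + 1 := Nat.lt_floor_add_one _
  have hle : 2 * n' + m ≤ n := by
    have : (2 * n' + m : ℝ) ≤ n :=
      calc (2 * n' + m : ℝ) ≤ n' * (2 + γ) := by linarith
        _ ≤ n * α * (2 + γ) := by gcongr
        _ = n := by rw [mul_assoc, p.mul_left, mul_one]
    exact_mod_cast this
  obtain ⟨u, hu⟩ := Nat.exists_eq_add_of_le hle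
  exact ⟨n', m, u, n * α - n', n' * γ - m, p, hu, by ring, by ring,
    ⟨by linarith, by linarith⟩, ⟨by linarith, by linarith⟩⟩

namespace Descent

variable {k n n' m u : ℕ} {α γ x y : ℝ}

lemma natCast_index_eq (d : Descent k α γ n n' m u x y) : (n : ℝ) = 2 * n' + m + u := by
  exact_mod_cast d.index_eq

lemma digit_eq (d : Descent k α γ n n' m u x y) : u = y + x * (2 + γ) := by
  linear_combination -d.natCast_index_eq - n * d.mul_left + (2 + γ) * d.natCast_mul_left +
    d.natCast_mul_right

lemma left_eq (d : Descent k α γ n n' m u x y) : x = α * (u - y) := by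
  linear_combination -x * d.mul_left - α * d.digit_eq

lemma floor_left (d : Descent k α γ n n' m u x y) : ⌊(n : ℝ) * α⌋₊ = n' := by
  have hα := d.pos_left
  obtain ⟨hx₀, hx₁⟩ := d.left_mem
  rw [Nat.floor_eq_iff (by positivity), d.natCast_mul_left]
  constructor <;> linarith

lemma floor_right (d : Descent k α γ n n' m u x y) : ⌊(n' : ℝ) * γ⌋₊ = m := by
  have hγ := d.pos_right
  obtain ⟨hy₀, hy₁⟩ := d.right_mem
  rw [Nat.floor_eq_iff (by positivity), d.natCast_mul_right]
  constructor <;> linarith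

lemma floorSum_eq (d : Descent k α γ n n' m u x y) :
    floorSum α n = n * n' - n' * (n' + 1) - n' * m + k * (m * (m + 1)) + floorSum α m :=
  d.toPeriodTwo.floorSum_eq d.floor_left d.floor_right

lemma index_eq_growth_mul (d : Descent k α γ n n' m u x y) :
    (n : ℝ) = growth k α * m + (growth k α * y + x * (2 + γ)) := by
  rw [← d.two_add_mul]
  linear_combination -n * d.mul_left + (2 + γ) * d.natCast_mul_left +
    (2 + γ) * (2 * k + α) * d.natCast_mul_right - (2 + γ) * n' * d.mul_right

lemma growth_mul_le (d : Descent k α γ n n' m u x y) : growth k α * m ≤ n := by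
  have hγ := d.pos_right
  have hy : 0 ≤ growth k α * y := mul_nonneg (by linarith [d.one_lt_growth]) d.right_mem.1
  have hx : 0 ≤ x * (2 + γ) := mul_nonneg d.left_mem.1 (by linarith)
  linarith [d.index_eq_growth_mul]

lemma index_lt (d : Descent k α γ n n' m u x y) (hn : n ≠ 0) : m < n := by
  have := d.growth_mul_le
  have := d.one_lt_growth
  rcases m.eq_zero_or_pos with rfl | hm
  · exact hn.bot_lt
  · have : (0 : ℝ) < m := mod_cast hm
    have : (m : ℝ) < n := by nlinarith
    exact_mod_cast this

lemma succ_mul_eq (d : Descent k α γ n n' m u x y) : (n + 1) * α = (n' : ℤ) + (x + α) := by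
  push_cast
  linear_combination d.natCast_mul_left

lemma succ_mul_eq' (d : Descent k α γ n n' m u x y) :
    (m + 1) * α = ((n' - 2 * k * (m + 1) : ℤ) : ℝ) + (2 * k + α) * (1 - y) := by
  push_cast
  linear_combination n' * d.mul_right - (2 * k + α) * d.natCast_mul_right

lemma growth_mul_left (d : Descent k α γ n n' m u x y) :
    growth k α * x = (2 * k + α) * (u - y) := by
  rw [← d.mul_growth]
  linear_combination growth k α * d.left_eq

lemma left_pos (d : Descent k α γ n n' m u x y) (hn : n ≠ 0) : 0 < x := by
  refine d.left_mem.1.lt_of_ne' fun h => (d.irrational.natCast_mul hn).ne_nat n' ?_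
  rw [d.natCast_mul_left, h, add_zero]

lemma left_ne_half (d : Descent k α γ n n' m u x y) (hn : n ≠ 0) : x ≠ 1 / 2 := by
  refine fun h => (d.irrational.natCast_mul (m := 2 * n) (by lia)).ne_nat (2 * n' + 1) ?_
  push_cast
  linear_combination 2 * d.natCast_mul_left + 2 * h

lemma right_ne (d : Descent k α γ n n' m u x y) : y ≠ 1 - γ / 2 := by
  refine fun h => (d.irrational_right.natCast_mul (m := 2 * n' + 1) (by lia)).ne_nat
    (2 * (m + 1)) ?_
  push_cast
  linear_combination 2 * d.natCast_mul_right + 2 * h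

lemma two_mul_ddisc_half_of_lt (d : Descent k α γ n n' m u x y) (hx : x < 1 / 2) :
    2 * ddisc α (1 / 2) (n + 1) = 2 * ddisc α (1 / 2) (m + 1) + u := by
  have hα := d.pos_left
  have hγ := d.pos_right
  obtain ⟨hx₀, -⟩ := d.left_mem
  obtain ⟨hy₀, hy₁⟩ := d.right_mem
  have hn' : ⌊(n : ℝ) * (2 * α)⌋₊ = 2 * n' := by
    rw [Nat.floor_eq_iff (by positivity)]; push_cast
    constructor <;> linarith [d.natCast_mul_left]
  have hm : ⌊((2 * n' : ℕ) : ℝ) * (γ / 2)⌋₊ = m := by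
    rw [Nat.floor_eq_iff (by positivity)]; push_cast
    constructor <;> linarith [d.natCast_mul_right]
  rw [two_mul_ddisc_half_succ hα.le, two_mul_ddisc_half_succ hα.le, d.floorSum_eq,
    d.floorSum_two_mul_eq hn' hm, d.natCast_index_eq]
  push_cast; ring

lemma floor_two_mul_of_half_lt (d : Descent k α γ n n' m u x y) (hx : 1 / 2 < x) :
    ⌊(n : ℝ) * (2 * α)⌋₊ = 2 * n' + 1 := by
  have hα := d.pos_left
  obtain ⟨-, hx₁⟩ := d.left_mem
  rw [Nat.floor_eq_iff (by positivity)]; push_cast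
  constructor <;> linarith [d.natCast_mul_left]

lemma two_mul_ddisc_half_of_half_lt_of_lt (d : Descent k α γ n n' m u x y) (hx : 1 / 2 < x)
    (hy : y < 1 - γ / 2) :
    2 * ddisc α (1 / 2) (n + 1) = 2 * ddisc α (1 / 2) (m + 1) + (2 - u) := by
  have hα := d.pos_left
  have hγ := d.pos_right
  obtain ⟨hy₀, -⟩ := d.right_mem
  have hm : ⌊((2 * n' + 1 : ℕ) : ℝ) * (γ / 2)⌋₊ = m := by
    rw [Nat.floor_eq_iff (by positivity)]; push_cast
    constructor <;> linarith [d.natCast_mul_right]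
  rw [two_mul_ddisc_half_succ hα.le, two_mul_ddisc_half_succ hα.le, d.floorSum_eq,
    d.floorSum_two_mul_eq (d.floor_two_mul_of_half_lt hx) hm, d.natCast_index_eq]
  push_cast; ring

lemma floor_succ_mul_two_mul (d : Descent k α γ n n' m u x y) (hy : 1 - γ / 2 < y) :
    (⌊((m + 1 : ℕ) : ℝ) * (2 * α)⌋₊ : ℝ) = 2 * n' - 4 * k * (m + 1) := by
  have hα := d.pos_left
  obtain ⟨-, hy₁⟩ := d.right_mem
  have expand : ((m + 1 : ℕ) : ℝ) * (2 * α) =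
      2 * n' - 4 * k * (m + 1) + 2 * (1 - y) * (2 * k + α) := by
    push_cast
    linear_combination 2 * n' * d.mul_right - 2 * (2 * k + α) * d.natCast_mul_right
  have rem_pos : 0 < 2 * (1 - y) * (2 * k + α) := by positivity
  have rem_lt : 2 * (1 - y) * (2 * k + α) < 1 :=
    calc 2 * (1 - y) * (2 * k + α) < γ * (2 * k + α) := by gcongr; linarith
      _ = 1 := d.mul_right
  rw [natCast_floor_eq_intCast_floor (by positivity), expand]
  have : ⌊(2 * n' - 4 * k * (m + 1) + 2 * (1 - y) * (2 * k + α) : ℝ)⌋ =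
      2 * n' - 4 * k * (m + 1) := by
    rw [Int.floor_eq_iff]; push_cast
    constructor <;> linarith
  rw [this]
  push_cast; ring

lemma two_mul_ddisc_half_of_half_lt_of_gt (d : Descent k α γ n n' m u x y) (hx : 1 / 2 < x)
    (hy : 1 - γ / 2 < y) :
    2 * ddisc α (1 / 2) (n + 1) = 2 * ddisc α (1 / 2) (m + 1) + (4 - u) := by
  have hα := d.pos_left
  have hγ := d.right_lt_half
  have hγ₀ := d.pos_right
  obtain ⟨-, hy₁⟩ := d.right_mem
  have hm : ⌊((2 * n' + 1 : ℕ) : ℝ) * (γ / 2)⌋₊ = m + 1 := by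
    rw [Nat.floor_eq_iff (by positivity)]; push_cast
    constructor <;> linarith [d.natCast_mul_right]
  rw [two_mul_ddisc_half_succ hα.le, two_mul_ddisc_half_succ hα.le, d.floorSum_eq,
    d.floorSum_two_mul_eq (d.floor_two_mul_of_half_lt hx) hm, floorSum_succ,
    d.floor_succ_mul_two_mul hy, d.natCast_index_eq]
  push_cast; ring

lemma digit_eq_one_or_two (d : Descent k α γ n n' m u x y) (hn : n ≠ 0) (hx : x < 1 / 2) :
    u = 1 ∨ u = 2 := by
  have hγ := d.pos_right
  obtain ⟨hy₀, hy₁⟩ := d.right_mem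
  have := d.left_pos hn
  have lower : 0 < x * (2 + γ) := by positivity
  have upper : x * (2 + γ) < 1 / 2 * (2 + γ) := by gcongr
  have h₀ : (0 : ℝ) < u := by linarith [d.digit_eq]
  have h₁ : (u : ℝ) < 3 := by linarith [d.digit_eq, d.right_lt_half]
  norm_cast at h₀ h₁
  lia

lemma digit_eq_two_or_three (d : Descent k α γ n n' m u x y) (hx : 1 / 2 < x) :
    u = 2 ∨ u = 3 := by
  have hγ := d.pos_right
  obtain ⟨hy₀, hy₁⟩ := d.right_mem
  obtain ⟨-, hx₁⟩ := d.left_mem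
  have lower : 1 / 2 * (2 + γ) < x * (2 + γ) := by gcongr
  have upper : x * (2 + γ) < 1 * (2 + γ) := by gcongr
  have h₀ : (1 : ℝ) < u := by linarith [d.digit_eq]
  have h₁ : (u : ℝ) < 4 := by linarith [d.digit_eq, d.right_lt_half]
  norm_cast at h₀ h₁
  lia

lemma adjacentHalfDisc_of_lt_half (d : Descent k α γ n n' m u x y) (hn : n ≠ 0)
    (hx : x < 1 / 2) :
    adjacentHalfDisc α n = adjacentHalfDisc α m ∨
      adjacentHalfDisc α n = adjacentHalfDisc α m + 1 := by
  have hα := d.two_fifths_lt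
  have hα' := d.lt_half
  have hx₀ := d.left_pos hn
  have hy₁ := d.right_mem.2
  have hK : 0 < (2 * k + α) * (1 - y) := mul_pos (by positivity) (by linarith)
  have hgrowth : 0 < growth k α := by linarith [d.one_lt_growth]
  have hgrowth' := growth_eq k α
  have remainder := d.growth_mul_left
  have increment := d.two_mul_ddisc_half_of_lt hx
  rcases d.digit_eq_one_or_two hn hx with rfl | rfl
  · push_cast at remainder increment
    by_cases hc : x < 1 / 2 - α
    · have : growth k α * x < growth k α * (1 / 2 - α) := by gcongr
      have hn := adjacentHalfDisc_eq_of_lt_half d.succ_mul_eq (by linarith) (by linarith)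
      have hm := adjacentHalfDisc_eq_of_lt_half d.succ_mul_eq' hK.le (by linarith [d.mul_growth])
      exact .inr (by linarith)
    · have hn := adjacentHalfDisc_eq_of_half_le d.succ_mul_eq (by linarith) (by linarith)
      rcases two_mul_ddisc_half_eq_or α m with hm | hm
      · exact .inl (by linarith)
      · exact .inr (by linarith)
  · push_cast at remainder increment
    have : growth k α * x < growth k α * (1 / 2) := by gcongr
    have hαx : α ≤ x := by
      rw [d.left_eq]; exact le_mul_of_one_le_right d.pos_left.le (by push_cast; linarith)
    have hn := adjacentHalfDisc_eq_of_half_le d.succ_mul_eq (by linarith) (by linarith)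
    have hm := adjacentHalfDisc_eq_of_lt_half d.succ_mul_eq' hK.le (by linarith)
    exact .inr (by linarith)

lemma adjacentHalfDisc_of_half_lt_of_lt (d : Descent k α γ n n' m u x y) (hx : 1 / 2 < x)
    (hy : y < 1 - γ / 2) :
    adjacentHalfDisc α n = adjacentHalfDisc α m ∨
      adjacentHalfDisc α n = adjacentHalfDisc α m + 1 := by
  have hα := d.two_fifths_lt
  have hα' := d.lt_half
  obtain ⟨-, hx₁⟩ := d.left_mem
  have hgrowth : 0 < growth k α := by linarith [d.one_lt_growth]
  have hgrowth' := growth_eq k α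
  have remainder := d.growth_mul_left
  have increment := d.two_mul_ddisc_half_of_half_lt_of_lt hx hy
  have hn' : (n + 1) * α = ((n' + 1 : ℤ) : ℝ) + (x + α - 1) := by
    rw [d.succ_mul_eq]; push_cast; ring
  rcases d.digit_eq_two_or_three hx with rfl | rfl
  · push_cast at remainder increment
    by_cases hc : x < 1 - α
    · have : growth k α * (1 / 2) < growth k α * x := by gcongr
      have : growth k α * x < growth k α * (1 - α) := by gcongr
      have hn := adjacentHalfDisc_eq_of_half_le d.succ_mul_eq (by linarith) (by linarith)
      have hm := adjacentHalfDisc_eq_of_half_le d.succ_mul_eq' (by linarith)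
        (by linarith [d.mul_growth])
      exact .inl (by linarith)
    · have hn := adjacentHalfDisc_eq_of_lt_half hn' (by linarith) (by linarith)
      rcases two_mul_ddisc_half_eq_or α m with hm | hm
      · exact .inl (by linarith)
      · exact .inr (by linarith)
  · push_cast at remainder increment
    have : growth k α * x < growth k α * 1 := by gcongr
    have hαx : α * (2 + γ / 2) < x := by
      rw [d.left_eq]; gcongr; push_cast; linarith
    have hKγ : (2 * k + α) * (γ / 2) < (2 * k + α) * (1 - y) := by gcongr; linarith
    have hn := adjacentHalfDisc_eq_of_lt_half hn' (by linarith [d.mul_left]) (by linarith)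
    have hm := adjacentHalfDisc_eq_of_half_le d.succ_mul_eq' (by linarith [d.mul_right])
      (by linarith)
    exact .inl (by linarith)

lemma adjacentHalfDisc_of_half_lt_of_gt (d : Descent k α γ n n' m u x y) (hx : 1 / 2 < x)
    (hy : 1 - γ / 2 < y) :
    adjacentHalfDisc α n = adjacentHalfDisc α m ∨
      adjacentHalfDisc α n = adjacentHalfDisc α m + 1 := by
  have hα := d.two_fifths_lt
  have hγ := d.pos_right
  have hy₁ := d.right_mem.2
  have increment := d.two_mul_ddisc_half_of_half_lt_of_gt hx hy
  have hu : u = 3 := by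
    have : 1 / 2 * (2 + γ) < x * (2 + γ) := by gcongr
    have : (2 : ℝ) < u := by linarith [d.digit_eq]
    norm_cast at this
    have := d.digit_eq_two_or_three hx
    lia
  subst hu
  have hK : 0 ≤ (2 * k + α) * (1 - y) := mul_nonneg (by positivity) (by linarith)
  have hKγ : (2 * k + α) * (1 - y) < (2 * k + α) * (γ / 2) := by gcongr; linarith
  have hm := adjacentHalfDisc_eq_of_lt_half d.succ_mul_eq' hK (by linarith [d.mul_right])
  push_cast at increment
  rcases two_mul_ddisc_half_eq_or α n with hn | hn
  · exact .inr (by linarith)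
  · exact .inl (by linarith)

lemma adjacentHalfDisc_eq_or (d : Descent k α γ n n' m u x y) (hn : n ≠ 0) :
    adjacentHalfDisc α n = adjacentHalfDisc α m ∨
      adjacentHalfDisc α n = adjacentHalfDisc α m + 1 := by
  rcases (d.left_ne_half hn).lt_or_gt with hx | hx
  · exact d.adjacentHalfDisc_of_lt_half hn hx
  rcases d.right_ne.lt_or_gt with hy | hy
  · exact d.adjacentHalfDisc_of_half_lt_of_lt hx hy
  · exact d.adjacentHalfDisc_of_half_lt_of_gt hx hy

end Descent

lemma le_add_logb_of_descent {f : ℕ → ℝ} {r : ℝ} (hr : 1 < r)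
    (h : ∀ n : ℕ, n ≠ 0 → ∃ m : ℕ, r * m ≤ n ∧ f n ≤ f m + 1) {n : ℕ} (hn : n ≠ 0) :
    f n ≤ f 0 + 1 + Real.logb r n := by
  induction n using Nat.strong_induction_on with
  | _ n ih =>
    obtain ⟨m, hmn, hf⟩ := h n hn
    rcases eq_or_ne m 0 with rfl | hm
    · have : 0 ≤ Real.logb r n := Real.logb_nonneg hr (mod_cast Nat.one_le_iff_ne_zero.2 hn)
      linarith
    · have hm' : (0 : ℝ) < m := mod_cast hm.bot_lt
      have hlt : (m : ℝ) < n := by nlinarith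
      calc f n ≤ f m + 1 := hf
        _ ≤ f 0 + 1 + Real.logb r m + 1 := by gcongr; exact ih m (mod_cast hlt) hm
        _ = f 0 + 1 + Real.logb r (r * m) := by
          rw [Real.logb_mul (by positivity) hm'.ne', Real.logb_self_eq_one hr]; ring
        _ ≤ f 0 + 1 + Real.logb r n := by gcongr

namespace PeriodTwo

variable {k : ℕ} {α γ : ℝ}

lemma adjacentHalfDisc_zero (p : PeriodTwo k α γ) : adjacentHalfDisc α 0 = 1 := by
  have : ((0 : ℕ) + 1) * α = (0 : ℤ) + α := by simp
  rw [adjacentHalfDisc_eq_of_lt_half this p.pos_left.le p.lt_half,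
    two_mul_ddisc_half_succ p.pos_left.le, floorSum_zero, floorSum_zero]
  norm_num

lemma one_le_adjacentHalfDisc (p : PeriodTwo k α γ) (n : ℕ) : 1 ≤ adjacentHalfDisc α n := by
  induction n using Nat.strong_induction_on with
  | _ n ih =>
    rcases eq_or_ne n 0 with rfl | hn
    · exact p.adjacentHalfDisc_zero.ge
    obtain ⟨n', m, u, x, y, d⟩ := p.exists_descent n
    have hm := ih m (d.index_lt hn)
    rcases d.adjacentHalfDisc_eq_or hn with h | h <;> linarith

lemma adjacentHalfDisc_le (p : PeriodTwo k α γ) {n : ℕ} (hn : n ≠ 0) :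
    adjacentHalfDisc α n ≤ 2 + Real.logb (growth k α) n := by
  refine (le_add_logb_of_descent p.one_lt_growth (fun n hn => ?_) hn).trans_eq
    (by rw [p.adjacentHalfDisc_zero, one_add_one_eq_two])
  obtain ⟨n', m, u, x, y, d⟩ := p.exists_descent n
  refine ⟨m, d.growth_mul_le, ?_⟩
  rcases d.adjacentHalfDisc_eq_or hn with h | h <;> linarith

lemma abs_ddisc_half_le (p : PeriodTwo k α γ) {n : ℕ} (hn : 2 ≤ n) :
    |ddisc α (1 / 2) n| ≤ 3 / 2 + 1 / 2 * Real.logb (growth k α) n := by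
  obtain ⟨n, rfl⟩ := Nat.exists_eq_add_of_le' (show 1 ≤ n by lia)
  have hn₀ : n ≠ 0 := by lia
  have lower := p.one_le_adjacentHalfDisc n
  have upper := p.adjacentHalfDisc_le hn₀
  have mono : Real.logb (growth k α) n ≤ Real.logb (growth k α) (n + 1 : ℕ) := by
    have := p.one_lt_growth
    gcongr
    lia
  rw [abs_of_nonneg] <;> rcases two_mul_ddisc_half_eq_or α n with h | h <;> linarith

end PeriodTwo

namespace Descent

variable {k n n' m u : ℕ} {α γ x y : ℝ}

lemma sawtoothSum_eq (d : Descent k α γ n n' m u x y) :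
    sawtoothSum α (n + 1) 0 = sawtoothSum α (m + 1) 0 +
      (α * (u - y) * (u - y + 1) + (2 * k + α) * y * (1 - y) - u) / 2 := by
  have hn' : (n' : ℝ) = (2 * k + α) * (m + y) := by
    linear_combination -n' * d.mul_right + (2 * k + α) * d.natCast_mul_right
  rw [sawtoothSum_succ_zero d.pos_left.le, sawtoothSum_succ_zero d.pos_left.le, d.floorSum_eq,
    d.natCast_index_eq, hn']
  have hgrowth := d.mul_growth
  rw [growth_eq] at hgrowth
  linear_combination
    (m + y) * ((2 * (2 * k + α) + 1) * (m + y) + 2 * (u - y) + 1) / 2 * hgrowth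

end Descent

namespace PeriodTwo

variable {k : ℕ} {α γ : ℝ}

lemma exists_descent_digit_two (p : PeriodTwo k α γ) (m : ℕ) :
    ∃ n n' x y, Descent k α γ n n' m 2 x y ∧ (2 * k + α) * y = k + 1 - Int.fract (m * α) := by
  have hα := p.pos_left
  have hα' := p.lt_half
  have hk := p.one_le
  set s := Int.fract (m * α) with hs
  have hs₀ : 0 ≤ s := Int.fract_nonneg _
  have hs₁ : s < 1 := Int.fract_lt_one _
  rw [fract_eq_sub_natFloor (by positivity)] at hs
  set n' := 2 * k * m + ⌊(m : ℝ) * α⌋₊ + k + 1 with hn'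
  have hγ := p.mul_right
  obtain ⟨y, hy⟩ : ∃ y, n' * γ = m + y := ⟨n' * γ - m, by ring⟩
  have hKy : (2 * k + α) * y = k + 1 - s := by
    have : (n' : ℝ) = 2 * k * m + ⌊(m : ℝ) * α⌋₊ + k + 1 := by rw [hn']; push_cast; ring
    linear_combination this + hs + n' * hγ - (2 * k + α) * hy
  have hy₀ : 0 ≤ y := nonneg_of_mul_nonneg_right (a := 2 * k + α) (by linarith) (by positivity)
  have hy₁ : y < 1 := lt_of_mul_lt_mul_left (a := 2 * k + α) (by linarith) (by positivity)
  refine ⟨2 * n' + m + 2, n', α * (2 - y), y, ⟨p, rfl, ?_, hy, ⟨?_, ?_⟩, ⟨hy₀, hy₁⟩⟩, hKy⟩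
  · push_cast
    linear_combination n' * p.mul_left - α * hy
  · exact mul_nonneg hα.le (by linarith)
  · nlinarith

/-- The descent with digit `2` and `y ≈ 1/2` nearly maximises the gain. -/
lemma exists_sawtoothSum_step (p : PeriodTwo k α γ) (hk : 3 ≤ k) (m : ℕ) :
    ∃ n, m < n ∧ (n + 1 : ℝ) ≤ growth k α * (m + 1) ∧
      sawtoothSum α (m + 1) 0 + 51 / 100 ≤ sawtoothSum α (n + 1) 0 := by
  have hk : (3 : ℝ) ≤ k := mod_cast hk
  have hα₀ := p.pos_left
  have hα₁ := p.lt_half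
  have hα : 46 / 100 < α := by
    by_contra! h
    nlinarith [p.quadratic]
  obtain ⟨n, n', x, y, d, hKy⟩ := p.exists_descent_digit_two m
  have hs₀ := Int.fract_nonneg (m * α)
  have hs₁ := Int.fract_lt_one (m * α)
  set s := Int.fract (m * α)
  have hy : y ≤ 62 / 100 := le_of_mul_le_mul_left (a := 2 * k + α) (by linarith) (by positivity)
  have left_gain : 151 / 100 ≤ α * (2 - y) * (2 - y + 1) :=
    calc (151 / 100 : ℝ) ≤ 46 / 100 * (2 - 62 / 100) * (2 - 62 / 100 + 1) := by norm_num
      _ ≤ α * (2 - y) * (2 - y + 1) := by gcongr; nlinarith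
  have right_gain : 151 / 100 ≤ (2 * k + α) * y * (1 - y) := by
    refine le_of_mul_le_mul_left (a := 2 * k + α) ?_ (by positivity)
    have hs : 0 ≤ s * (2 - α - s) := mul_nonneg hs₀ (by linarith)
    calc (2 * k + α) * (151 / 100) ≤ (k + 1) * (k - 1 + α) + s * (2 - α - s) := by nlinarith
      _ = (2 * k + α) * y * (2 * k + α - (2 * k + α) * y) := by rw [hKy]; ring
      _ = (2 * k + α) * ((2 * k + α) * y * (1 - y)) := by ring
  have expand : (n : ℝ) = growth k α * m + 2 * ((2 * k + α) * y) + 2 := by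
    have := d.digit_eq
    push_cast at this
    rw [d.index_eq_growth_mul, growth_eq]
    linear_combination -this
  refine ⟨n, by have := d.index_eq; lia, by linarith [growth_eq k α], ?_⟩
  · rw [d.sawtoothSum_eq]
    push_cast
    linarith

lemma exists_le_sawtoothSum (p : PeriodTwo k α γ) (hk : 3 ≤ k) (m : ℕ) :
    ∃ n, m ≤ n ∧ (n + 1 : ℝ) ≤ growth k α ^ m ∧
      51 / 100 * m - 1 / 2 ≤ sawtoothSum α (n + 1) 0 := by
  induction m with
  | zero => exact ⟨0, le_rfl, by simp, by simp [sawtoothSum]⟩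
  | succ m ih =>
    obtain ⟨n, hmn, hn, hsum⟩ := ih
    obtain ⟨n₁, hnn₁, hn₁, hsum₁⟩ := p.exists_sawtoothSum_step hk n
    refine ⟨n₁, by lia, hn₁.trans ?_, by push_cast; linarith⟩
    have := p.one_lt_growth
    rw [pow_succ']
    gcongr

end PeriodTwo

section LimsupDivLog

variable {f : ℕ → ℝ} {C c : ℝ}

lemma tendsto_log_natCast_atTop : Tendsto (fun n : ℕ => Real.log n) atTop atTop :=
  Real.tendsto_log_atTop.comp tendsto_natCast_atTop_atTop

lemma eventually_div_log_le (h : ∀ᶠ n : ℕ in atTop, f n ≤ C + c * Real.log n) :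
    ∀ᶠ n : ℕ in atTop, f n / Real.log n ≤ c + C / Real.log n := by
  filter_upwards [h, tendsto_log_natCast_atTop.eventually_gt_atTop 0] with n hn hlog
  rw [div_le_iff₀ hlog, add_mul, div_mul_cancel₀ _ hlog.ne', add_comm]
  exact hn

lemma tendsto_add_div_log (C c : ℝ) :
    Tendsto (fun n : ℕ => c + C / Real.log n) atTop (nhds c) := by
  simpa using (tendsto_log_natCast_atTop.const_div_atTop C).const_add c

lemma isBoundedUnder_div_log (h : ∀ᶠ n : ℕ in atTop, f n ≤ C + c * Real.log n) :
    IsBoundedUnder (· ≤ ·) atTop fun n : ℕ => f n / Real.log n :=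
  (tendsto_add_div_log C c).isBoundedUnder_le.mono_le (eventually_div_log_le h)

lemma limsup_div_log_le (hf : ∀ n, 0 ≤ f n) (h : ∀ᶠ n : ℕ in atTop, f n ≤ C + c * Real.log n) :
    limsup (fun n : ℕ => f n / Real.log n) atTop ≤ c := by
  rw [← (tendsto_add_div_log C c).limsup_eq]
  exact limsup_le_limsup (eventually_div_log_le h)
    (isCoboundedUnder_le_of_le atTop fun n => div_nonneg (hf n) (Real.log_natCast_nonneg n))
    (tendsto_add_div_log C c).isBoundedUnder_le

lemma tendsto_mul_sub_div_mul (C c L : ℝ) (hL : L ≠ 0) :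
    Tendsto (fun m : ℕ => (c * m - C) / (m * L)) atTop (nhds (c / L)) := by
  have : Tendsto (fun m : ℕ => c / L - C / L / m) atTop (nhds (c / L)) := by
    simpa using (tendsto_const_div_atTop_nhds_zero_nat (C / L)).const_sub (c / L)
  refine this.congr' ?_
  filter_upwards [eventually_ne_atTop 0] with m hm
  field_simp

lemma div_le_limsup_div_log {L : ℝ} (hc : 0 < c) (hL : L ≠ 0)
    (hbdd : IsBoundedUnder (· ≤ ·) atTop fun n : ℕ => f n / Real.log n)
    (h : ∀ m : ℕ, ∃ n ≥ m, Real.log n ≤ m * L ∧ c * m - C ≤ f n) :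
    c / L ≤ limsup (fun n : ℕ => f n / Real.log n) atTop := by
  refine le_of_forall_lt_imp_le_of_dense fun b hb =>
    le_limsup_of_frequently_le (frequently_atTop.2 fun N => ?_) hbdd
  have large := (tendsto_natCast_atTop_atTop.const_mul_atTop hc).eventually_ge_atTop C
  obtain ⟨m, hbm, hCm, hNm, hm⟩ := ((tendsto_mul_sub_div_mul C c L hL).eventually_const_lt hb
    |>.and <| large.and <| (eventually_ge_atTop N).and (eventually_ge_atTop 2)).exists
  obtain ⟨n, hmn, hlog, hf⟩ := h m
  have log_pos : 0 < Real.log n := Real.log_pos (mod_cast (by lia : 1 < n))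
  refine ⟨n, hNm.trans hmn, hbm.le.trans ?_⟩
  exact div_le_div₀ ((sub_nonneg.2 hCm).trans hf) hf log_pos hlog

end LimsupDivLog

namespace PeriodTwo

variable {k : ℕ} {α γ : ℝ}

lemma limsup_abs_ddisc_half_le (p : PeriodTwo k α γ) :
    limsup (fun n : ℕ => |ddisc α (1 / 2) n| / Real.log n) atTop ≤
      1 / 2 / Real.log (growth k α) := by
  refine limsup_div_log_le (C := 3 / 2) (fun n => abs_nonneg _) ?_
  filter_upwards [eventually_ge_atTop 2] with n hn
  refine (p.abs_ddisc_half_le hn).trans_eq ?_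
  rw [← Real.log_div_log]
  ring

lemma isBoundedUnder_nDsup_div_log (p : PeriodTwo k α γ) :
    IsBoundedUnder (· ≤ ·) atTop fun n : ℕ => nDsup α n / Real.log n := by
  obtain ⟨A, hA, hbad⟩ := p.exists_isBadlyApproximable
  refine isBoundedUnder_div_log (C := 9) (c := 9 * A) ?_
  filter_upwards [eventually_gt_atTop 0] with n hn
  exact hbad.nDsup_le hA hn

lemma le_limsup_nDsup (p : PeriodTwo k α γ) (hk : 3 ≤ k) :
    51 / 100 / Real.log (growth k α) ≤
      limsup (fun n : ℕ => nDsup α n / Real.log n) atTop := by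
  refine div_le_limsup_div_log (C := 1 / 2) (by norm_num) (Real.log_pos p.one_lt_growth).ne'
    p.isBoundedUnder_nDsup_div_log fun m => ?_
  obtain ⟨n, hmn, hn, hsum⟩ := p.exists_le_sawtoothSum hk m
  refine ⟨n + 1, by lia, ?_, hsum.trans (sawtoothSum_zero_le_nDsup α (n + 1))⟩
  rw [← Real.log_pow]
  exact Real.log_le_log (by positivity) (mod_cast hn)

end PeriodTwo

/-- for the quadratic irrational `α` with `a_{2i-1} = 2` and
`a_{2i} = 2k` (`k > 2` fixed), one has
`limsup_n n D_n^*(α)/log n > limsup_n |d_n(α, 1/2)|/log n`. -/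
theorem boris_counterexample (k : ℕ) (hk : 2 < k) (α : ℝ) (hirr : Irrational α)
    (h0 : 0 < α) (h1 : α < 1)
    (ha : ∀ i : ℕ, pq α (2 * i + 1) = 2 ∧ pq α (2 * i + 2) = 2 * k) :
    Filter.limsup (fun n : ℕ => |ddisc α (1 / 2) n| / Real.log n) Filter.atTop <
      Filter.limsup (fun n : ℕ => nDsup α n / Real.log n) Filter.atTop := by
  have p := periodTwo_of_pq hirr ⟨h0, h1⟩ ha
  have log_pos := Real.log_pos p.one_lt_growth
  calc _ ≤ 1 / 2 / Real.log (growth k α) := p.limsup_abs_ddisc_half_le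
    _ < 51 / 100 / Real.log (growth k α) := by rw [div_lt_div_iff_of_pos_right log_pos]; norm_num
    _ ≤ _ := p.le_limsup_nDsup hk
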